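/- arXiv:1602.01596 — 2 statements merged into one kernel-verified Lean document; each statement's English description precedes it below -/
import Mathlib

section
/- Let k be an algebraically closed field of characteristic 2 and let L = k((t)). Every ℤ/2-extension M/L admits a unique Artin-Schreier representative a ∈ t⁻¹k[t⁻¹] (i.e., M ≅ L[x]/(x²−x−a)) such that a is a polynomial in t⁻¹ with only odd-degree terms. -/
namespace ASProof

lemma algMap {k : Type*} [Field k] (c : k) :
    algebraMap k (LaurentSeries k) c = HahnSeries.single (0 : ℤ) c := by
  rw [HahnSeries.algebraMap_apply', PowerSeries.algebraMap_apply]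
  simp

lemma aeval_mono {k : Type*} [Field k] (n : ℕ) (c : k) :
    Polynomial.aeval ((HahnSeries.single (1 : ℤ) (1 : k))⁻¹ : LaurentSeries k)
      (Polynomial.monomial n c) = HahnSeries.single (-(n : ℤ)) c := by
  rw [Polynomial.aeval_monomial, HahnSeries.inv_single, HahnSeries.single_pow, algMap,
    HahnSeries.single_mul_single]
  simp

lemma aeval_coeff {k : Type*} [Field k] (p : Polynomial k) (m : ℕ) :
    (Polynomial.aeval ((HahnSeries.single (1 : ℤ) (1 : k))⁻¹ : LaurentSeries k) p).coeff (-(m : ℤ))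
      = p.coeff m := by
  induction p using Polynomial.induction_on' with
  | add p q hp hq => simp only [map_add, HahnSeries.coeff_add, hp, hq, Polynomial.coeff_add]
  | monomial n c =>
    rw [aeval_mono, Polynomial.coeff_monomial]
    by_cases h : n = m
    · subst h; simp
    · rw [HahnSeries.coeff_single_of_ne (by omega)]; simp [h]

/-- `a` is Artin-Schreier equivalent to a standard form. -/
def Red {k : Type*} [Field k] (a : LaurentSeries k) : Prop :=
  ∃ (p : Polynomial k) (u : LaurentSeries k), (∀ n, p.coeff n ≠ 0 → Odd n) ∧
    a = Polynomial.aeval ((HahnSeries.single (1 : ℤ) (1 : k))⁻¹ : LaurentSeries k) p + (u ^ 2 - u)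

lemma two_eq_zero {k : Type*} [Field k] [CharP k 2] : (2 : LaurentSeries k) = 0 := by
  have h : (2 : k) = 0 := CharTwo.two_eq_zero
  rw [← map_ofNat (HahnSeries.C : k →+* LaurentSeries k) 2, h, map_zero]

lemma Red.add {k : Type*} [Field k] [CharP k 2] {a b : LaurentSeries k} (ha : Red a) (hb : Red b) :
    Red (a + b) := by
  obtain ⟨p, u, hp, rfl⟩ := ha
  obtain ⟨q, v, hq, rfl⟩ := hb
  refine ⟨p + q, u + v, fun n hn => ?_, ?_⟩
  · by_cases h : p.coeff n = 0
    · exact hq n (by simpa [h] using hn)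
    · exact hp n h
  · rw [map_add]
    linear_combination (-(u * v)) * two_eq_zero (k := k)

lemma red_single {k : Type*} [Field k] [IsAlgClosed k] [CharP k 2] (n : ℕ) (hn : 0 < n) (c : k) :
    Red (HahnSeries.single (-(n : ℤ)) c) := by
  induction n using Nat.strong_induction_on generalizing c with
  | _ n ih =>
  rcases Nat.even_or_odd n with h | h
  · obtain ⟨m, rfl⟩ := h
    obtain ⟨d, hd⟩ := IsAlgClosed.exists_pow_nat_eq c (n := 2) (by norm_num)
    have h1 : Red ((HahnSeries.single (-(m : ℤ)) d : LaurentSeries k) ^ 2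
        - HahnSeries.single (-(m : ℤ)) d) := ⟨0, _, by simp, by rw [map_zero, zero_add]⟩
    have h2 := h1.add (ih m (by omega) (by omega) d)
    rw [sub_add_cancel, HahnSeries.single_pow, hd] at h2
    convert h2 using 2
    simp; ring_nf
  · refine ⟨Polynomial.monomial n c, 0, fun i hi => ?_, ?_⟩
    · rw [Polynomial.coeff_monomial] at hi
      have : n = i := by by_contra h'; simp [h'] at hi
      exact this ▸ h
    · rw [aeval_mono]; simp

lemma exists_ps {k : Type*} [Field k] [IsAlgClosed k] [CharP k 2] (f : PowerSeries k) :
    ∃ u : PowerSeries k, f = u ^ 2 - u := by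
  obtain ⟨c, hc⟩ := IsAlgClosed.exists_root
    (Polynomial.X ^ 2 - Polynomial.X - Polynomial.C (PowerSeries.constantCoeff f) : Polynomial k)
    (by
      have : (Polynomial.X ^ 2 - Polynomial.X - Polynomial.C (PowerSeries.constantCoeff f) :
        Polynomial k).degree = 2 := by compute_degree!
      rw [this]; norm_num)
  have hc' : c ^ 2 - c - PowerSeries.constantCoeff f = 0 := by simpa using hc
  have two : (2 : PowerSeries k) = 0 := by
    have h : (2 : k) = 0 := CharTwo.two_eq_zero
    rw [← map_ofNat (PowerSeries.C : k →+* PowerSeries k) 2, h, map_zero]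
  obtain ⟨u, hu, -⟩ := HenselianRing.is_henselian (I := Ideal.span {(PowerSeries.X : PowerSeries k)})
    (Polynomial.X ^ 2 - Polynomial.X - Polynomial.C f) (by monicity!) (PowerSeries.C c)
    (by
      rw [Ideal.mem_span_singleton, PowerSeries.X_dvd_iff]
      simpa using hc')
    (by
      have : Polynomial.eval (PowerSeries.C c) (Polynomial.derivative
        (Polynomial.X ^ 2 - Polynomial.X - Polynomial.C f)) = -1 := by
        have e : Polynomial.eval (PowerSeries.C c) (Polynomial.derivative
            (Polynomial.X ^ 2 - Polynomial.X - Polynomial.C f)) = 2 * PowerSeries.C c - 1 := by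
          simp [one_add_one_eq_two]
        rw [e, two]; ring
      rw [this]
      simp)
  refine ⟨u, ?_⟩
  have : u ^ 2 - u - f = 0 := by simpa using hu
  linear_combination -this

lemma red_of_bound {k : Type*} [Field k] [IsAlgClosed k] [CharP k 2] (n : ℕ) (a : LaurentSeries k)
    (ha : ∀ i : ℤ, i < -(n : ℤ) → a.coeff i = 0) : Red a := by
  induction n generalizing a with
  | zero =>
    obtain ⟨u, hu⟩ := exists_ps (PowerSeries.mk fun n => a.coeff n)
    refine ⟨0, HahnSeries.ofPowerSeries ℤ k u, by simp, ?_⟩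
    rw [map_zero, zero_add, ← map_pow, ← map_sub, ← hu]
    ext i
    rw [PowerSeries.coeff_coe]
    split_ifs with h
    · exact ha i (by simpa using h)
    · simp [abs_of_nonneg (not_lt.1 h)]
  | succ n ih =>
    have h1 := ih (a - HahnSeries.single (-((n + 1 : ℕ) : ℤ)) (a.coeff (-((n + 1 : ℕ) : ℤ)))) (by
      intro i hi
      by_cases h : i = -((n + 1 : ℕ) : ℤ)
      · subst h; simp
      · rw [HahnSeries.coeff_sub, HahnSeries.coeff_single_of_ne h, ha i (by omega), sub_zero])
    have h2 := h1.add (red_single (n + 1) (by omega) (a.coeff (-((n + 1 : ℕ) : ℤ))))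
    rwa [sub_add_cancel] at h2

lemma red {k : Type*} [Field k] [IsAlgClosed k] [CharP k 2] (a : LaurentSeries k) : Red a := by
  refine red_of_bound a.order.natAbs a fun i hi => HahnSeries.coeff_eq_zero_of_lt_order ?_
  omega

lemma uniq {k : Type*} [Field k] (q : Polynomial k)
    (hq : ∀ n, q.coeff n ≠ 0 → Odd n) (u : LaurentSeries k)
    (h : u ^ 2 - u =
      Polynomial.aeval ((HahnSeries.single (1 : ℤ) (1 : k))⁻¹ : LaurentSeries k) q) : q = 0 := by
  by_cases hu : u = 0
  · subst hu
    ext n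
    rw [← aeval_coeff, ← h]; simp
  rcases lt_or_ge u.order 0 with ho | ho
  · exfalso
    obtain ⟨m, hm⟩ : ∃ m : ℕ, u.order = -(m : ℤ) := ⟨u.order.natAbs, by omega⟩
    have h1 := aeval_coeff q (2 * m)
    have e : (-((2 * m : ℕ) : ℤ)) = u.order + u.order := by rw [hm]; push_cast; ring
    rw [← h, HahnSeries.coeff_sub, e, pow_two, HahnSeries.coeff_mul_order_add_order,
      HahnSeries.coeff_eq_zero_of_lt_order (by omega : u.order + u.order < u.order), sub_zero] at h1
    have hne : u.leadingCoeff * u.leadingCoeff ≠ 0 :=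
      mul_self_ne_zero.2 (HahnSeries.leadingCoeff_ne_zero.2 hu)
    rw [h1] at hne
    have := hq _ hne
    exact (Nat.not_odd_iff_even.2 (even_two_mul m)) this
  · ext n
    by_cases hn : n = 0
    · subst hn
      by_contra hc
      have := hq 0 (by simpa using hc)
      simp at this
    · rw [← aeval_coeff, ← h, HahnSeries.coeff_sub, pow_two,
        HahnSeries.coeff_eq_zero_of_lt_order (x := u) (by omega),
        HahnSeries.coeff_eq_zero_of_lt_order (x := u * u) (by rw [HahnSeries.order_mul hu hu]; omega)]
      simp

lemma two_M {L M : Type*} [Field L] [CharP L 2] [Field M] [Algebra L M] : (2 : M) = 0 := by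
  have h : (2 : L) = 0 := CharTwo.two_eq_zero
  rw [← map_ofNat (algebraMap L M) 2, h, map_zero]

lemma exists_sigma {L M : Type*} [Field L] [Field M] [Algebra L M] [IsGalois L M]
    (hM : Module.finrank L M = 2) :
    ∃ σ : M ≃ₐ[L] M, σ ≠ 1 ∧ ∀ x : M, σ x = x → ∃ y, algebraMap L M y = x := by
  have : FiniteDimensional L M := Module.finite_of_finrank_pos (by omega)
  have hc : Nat.card (M ≃ₐ[L] M) = 2 := by rw [IsGalois.card_aut_eq_finrank, hM]
  obtain ⟨σ, τ, hne, hu⟩ := Nat.card_eq_two_iff.1 hc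
  have key : ∀ σ τ : M ≃ₐ[L] M, ({σ, τ} : Set _) = Set.univ → σ = 1 → τ ≠ 1 →
      ∃ σ : M ≃ₐ[L] M, σ ≠ 1 ∧ ∀ x : M, σ x = x → ∃ y, algebraMap L M y = x := by
    intro σ τ hu hs ht
    refine ⟨τ, ht, fun x hx => ?_⟩
    have : x ∈ Set.range (algebraMap L M) := by
      rw [IsGalois.mem_range_algebraMap_iff_fixed]
      intro f
      have : f ∈ ({σ, τ} : Set _) := hu ▸ Set.mem_univ f
      rcases this with h | h
      · rw [h, hs]; rfl
      · rw [h]; exact hx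
    exact this
  have h1 : (1 : M ≃ₐ[L] M) ∈ ({σ, τ} : Set _) := hu ▸ Set.mem_univ _
  rcases h1 with h | h
  · exact key σ τ hu h.symm (by rw [h]; exact hne.symm)
  · exact key τ σ (by rw [Set.pair_comm]; exact hu) h.symm (by rw [h]; exact hne)

lemma adjoin_top {L M : Type*} [Field L] [Field M] [Algebra L M]
    (hM : Module.finrank L M = 2) (x : M) (hx : ∀ y, algebraMap L M y ≠ x) :
    Algebra.adjoin L ({x} : Set M) = ⊤ := by
  have := Subalgebra.isSimpleOrder_of_finrank hM
  rcases eq_bot_or_eq_top (Algebra.adjoin L ({x} : Set M)) with h | h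
  · have hx' : x ∈ Algebra.adjoin L ({x} : Set M) := Algebra.self_mem_adjoin_singleton L x
    rw [h, Algebra.mem_bot] at hx'
    obtain ⟨y, hy⟩ := hx'
    exact absurd hy (hx y)
  · exact h

lemma exists_AS {L M : Type*} [Field L] [CharP L 2] [Field M] [Algebra L M]
    (σ : M ≃ₐ[L] M) (hσ : σ ≠ 1) (hfix : ∀ x : M, σ x = x → ∃ y, algebraMap L M y = x)
    (hσ2 : ∀ x, σ (σ x) = x) :
    ∃ (x : M) (a : L), σ x = x + 1 ∧ x ^ 2 - x = algebraMap L M a := by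
  have two : (2 : M) = 0 := two_M (L := L)
  obtain ⟨y, hy⟩ : ∃ y, σ y ≠ y := by
    by_contra! h
    exact hσ (AlgEquiv.ext h)
  have hs : σ y + y ≠ 0 := fun h => hy (by linear_combination h - y * two)
  have hss : σ (σ y + y) = σ y + y := by rw [map_add, hσ2, add_comm]
  have hx : σ (y / (σ y + y)) = y / (σ y + y) + 1 := by
    rw [map_div₀, hss]
    field_simp
    linear_combination (-y) * two
  obtain ⟨a, ha⟩ := hfix ((y / (σ y + y)) ^ 2 - y / (σ y + y)) (by
    rw [map_sub, map_pow, hx]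
    linear_combination (y / (σ y + y)) * two)
  exact ⟨_, a, hx, ha.symm⟩

lemma sigma_gen {L M : Type*} [Field L] [CharP L 2] [Field M] [Algebra L M]
    (σ : M ≃ₐ[L] M) (hσ : σ ≠ 1) (x : M) (a : L) (hx : x ^ 2 - x = algebraMap L M a)
    (hg : Algebra.adjoin L ({x} : Set M) = ⊤) : σ x = x + 1 := by
  have two : (2 : M) = 0 := two_M (L := L)
  have h1 : σ x ^ 2 - σ x = algebraMap L M a := by
    rw [← map_pow, ← map_sub, hx, AlgEquiv.commutes]
  have h2 : (σ x - x) * (σ x - x - 1) = 0 := by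
    linear_combination h1 - hx + (x ^ 2 - σ x * x) * two
  rcases mul_eq_zero.1 h2 with h | h
  · exfalso
    apply hσ
    have : (σ : M →ₐ[L] M) = AlgHom.id L M := AlgHom.ext_of_adjoin_eq_top hg (by
      intro z hz
      rw [Set.mem_singleton_iff.1 hz]
      simpa using sub_eq_zero.1 h)
    ext z
    exact DFunLike.congr_fun this z
  · linear_combination h

instance {k : Type*} [Field k] [CharP k 2] : CharP (LaurentSeries k) 2 :=
  charP_of_injective_ringHom (HahnSeries.C_injective (Γ := ℤ) (R := k)) 2

end ASProof

/-- Let `k` be an algebraically closed field of characteristic 2 and `L = k((t))`.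
Every `ℤ/2`-extension `M/L` admits a unique Artin–Schreier representative
`a ∈ t⁻¹k[t⁻¹]` in standard form (a polynomial in `t⁻¹` with only odd-degree terms)
with `M ≅ L[x]/(x² − x − a)`. -/
theorem unique_standard_form_representative
    (k : Type*) [Field k] [IsAlgClosed k] [CharP k 2]
    (M : Type*) [Field M] [Algebra (LaurentSeries k) M]
    [IsGalois (LaurentSeries k) M] (hM : Module.finrank (LaurentSeries k) M = 2) :
    ∃! a : LaurentSeries k,
      (∃ p : Polynomial k, (∀ n, p.coeff n ≠ 0 → Odd n) ∧
        a = Polynomial.aeval ((HahnSeries.single (1 : ℤ) (1 : k))⁻¹ : LaurentSeries k) p) ∧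
      ∃ x : M, x ^ 2 - x = algebraMap (LaurentSeries k) M a ∧
        Algebra.adjoin (LaurentSeries k) ({x} : Set M) = ⊤ := by
  obtain ⟨σ, hσ, hfix⟩ := ASProof.exists_sigma hM
  have two : (2 : M) = 0 := ASProof.two_M (L := LaurentSeries k)
  have hσ2 : ∀ x, σ (σ x) = x := by
    have : FiniteDimensional (LaurentSeries k) M := Module.finite_of_finrank_pos (by omega)
    have hc : Nat.card (M ≃ₐ[LaurentSeries k] M) = 2 := by rw [IsGalois.card_aut_eq_finrank, hM]
    have h : σ ^ 2 = 1 := by rw [← hc]; exact pow_card_eq_one'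
    intro x
    exact DFunLike.congr_fun (pow_two σ ▸ h) x
  obtain ⟨x, a, hx, hxa⟩ := ASProof.exists_AS σ hσ hfix hσ2
  obtain ⟨p, u, hp, ha⟩ := ASProof.red a
  refine ⟨_, ⟨⟨p, hp, rfl⟩, x - algebraMap _ M u, ?_, ?_⟩, ?_⟩
  · have h := congrArg (algebraMap (LaurentSeries k) M) ha
    rw [map_add, map_sub, map_pow] at h
    linear_combination hxa + h + (algebraMap _ M u ^ 2 - x * algebraMap _ M u) * two
  · apply ASProof.adjoin_top hM
    intro y hy
    have h := congrArg σ hy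
    rw [AlgEquiv.commutes, map_sub, AlgEquiv.commutes, hx, hy] at h
    exact one_ne_zero (α := M) (by linear_combination -h)
  · rintro b ⟨⟨q, hq, rfl⟩, z, hz, hzg⟩
    have hσz := ASProof.sigma_gen σ hσ z _ hz hzg
    obtain ⟨w, hw⟩ := hfix (z - (x - algebraMap _ M u)) (by
      rw [map_sub, map_sub, AlgEquiv.commutes, hx, hσz]; ring)
    have h0 : q - p = 0 := by
      refine ASProof.uniq (q - p) (fun n hn => ?_) w ?_
      · by_cases h : p.coeff n = 0
        · exact hq n (by simpa [h] using hn)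
        · exact hp n h
      · apply (algebraMap (LaurentSeries k) M).injective
        have h := congrArg (algebraMap (LaurentSeries k) M) ha
        rw [map_add, map_sub, map_pow] at h
        rw [map_sub, map_pow, hw, map_sub, map_sub]
        linear_combination hz - hxa - h + (x ^ 2 - z * x + z * algebraMap _ M u - x * algebraMap _ M u) * two
    rw [sub_eq_zero.1 h0]
end

section
/- Let k be algebraically closed of characteristic 2, K = k((s)), L = k((t)) with t³ = s, and σ a generator of Gal(L/K). Let a ∈ t⁻¹k[t⁻¹] be nonzero in standard form (only odd-degree terms in t⁻¹). Then the Galois closure N over K of the Artin-Schreier extension L[x]/(x²−x−a) satisfies Gal(N/K) ≅ A₄ if and only if a has no nonzero terms of degree divisible by 3. -/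
theorem A4aux_coeff_sq {k : Type*} [Field k] [CharP k 2] (Y : PowerSeries k) (n : ℕ) :
    PowerSeries.coeff n (Y ^ 2) = if 2 ∣ n then (PowerSeries.coeff (n / 2) Y) ^ 2 else 0 := by
  classical
  rw [pow_two, PowerSeries.coeff_mul,
    ← Finset.sum_filter_add_sum_filter_not _ (fun x : ℕ × ℕ => x.1 = x.2)]
  have h2 : ∑ x ∈ Finset.HasAntidiagonal.antidiagonal n with ¬ x.1 = x.2,
      PowerSeries.coeff x.1 Y * PowerSeries.coeff x.2 Y = 0 := by
    refine Finset.sum_involution (fun x _ => x.swap) ?_ ?_ ?_ ?_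
    · intro x _
      simp only [Prod.fst_swap, Prod.snd_swap]
      rw [mul_comm (PowerSeries.coeff x.2 Y)]
      exact CharTwo.add_self_eq_zero _
    · intro x hx _ h
      simp only [Finset.mem_filter] at hx
      exact hx.2 (congrArg Prod.snd h)
    · intro x hx
      simp only [Finset.mem_filter, Finset.HasAntidiagonal.mem_antidiagonal] at hx ⊢
      simp only [Prod.fst_swap, Prod.snd_swap]
      exact ⟨by omega, fun h => hx.2 h.symm⟩
    · intro x _
      simp
  rw [h2, add_zero]
  split_ifs with h
  · obtain ⟨m, rfl⟩ := h
    have : (Finset.HasAntidiagonal.antidiagonal (2 * m)).filter (fun x : ℕ × ℕ => x.1 = x.2) = {(m, m)} := by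
      ext ⟨i, j⟩
      simp only [Finset.mem_filter, Finset.HasAntidiagonal.mem_antidiagonal, Finset.mem_singleton, Prod.mk.injEq]
      omega
    rw [this]
    simp [pow_two]
  · have : (Finset.HasAntidiagonal.antidiagonal n).filter (fun x : ℕ × ℕ => x.1 = x.2) = ∅ := by
      ext ⟨i, j⟩
      simp only [Finset.mem_filter, Finset.HasAntidiagonal.mem_antidiagonal, Finset.notMem_empty, iff_false]
      omega
    rw [this]
    simp

noncomputable def A4aux_c {k : Type*} [Field k] (h : ℕ → k) : ℕ → k
  | 0 => 0
  | n + 1 => (if 2 ∣ n + 1 then (A4aux_c h ((n + 1) / 2)) ^ 2 else 0) - h (n + 1)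

theorem A4aux_AS_solve {k : Type*} [Field k] [CharP k 2] (H : PowerSeries k)
    (h0 : PowerSeries.coeff 0 H = 0) : ∃ Y : PowerSeries k, Y ^ 2 - Y = H := by
  refine ⟨PowerSeries.mk (A4aux_c fun n => PowerSeries.coeff n H), ?_⟩
  ext n
  rw [map_sub, A4aux_coeff_sq]
  simp only [PowerSeries.coeff_mk]
  cases n with
  | zero => simp [A4aux_c, h0]
  | succ n => 
    conv_lhs => 
      rw [A4aux_c.eq_2]
    ring

/-- odd negative order elements are not of the form y² - y -/
theorem A4aux_order_even {k : Type*} [Field k] (y h : LaurentSeries k)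
    (hy : y ^ 2 - y = h) (n : ℤ) (hn : n < 0) (hne : h.coeff n ≠ 0) :
    ∃ e : ℤ, e < 0 ∧ h.coeff (2 * e) ≠ 0 ∧ ∀ m < 2 * e, h.coeff m = 0 := by
  have hy0 : y ≠ 0 := by
    rintro rfl
    apply hne
    rw [← hy]
    simp
  have hc : ∀ m, m < 2 * y.order → m < y.order → h.coeff m = 0 := by
    intro m hm hm2
    rw [← hy, HahnSeries.coeff_sub, HahnSeries.coeff_eq_zero_of_lt_order hm2,
      HahnSeries.coeff_eq_zero_of_lt_order, sub_zero]
    rw [pow_two, HahnSeries.order_mul hy0 hy0]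
    omega
  have he : y.order < 0 := by
    by_contra hcon
    exact hne (hc n (by omega) (by omega))
  refine ⟨y.order, he, ?_, fun m hm => hc m hm (by omega)⟩
  rw [← hy, HahnSeries.coeff_sub, HahnSeries.coeff_eq_zero_of_lt_order (x := y) (by omega),
    sub_zero, pow_two, two_mul, HahnSeries.coeff_mul_order_add_order]
  exact mul_ne_zero (HahnSeries.leadingCoeff_ne_zero.mpr hy0) (HahnSeries.leadingCoeff_ne_zero.mpr hy0)

theorem A4aux_algebraMap {k : Type*} [Field k] (c : k) :
    algebraMap k (LaurentSeries k) c = HahnSeries.C c := by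
  rw [HahnSeries.algebraMap_apply']
  simp

theorem A4aux_coeff_aeval {k : Type*} [Field k] (q : Polynomial k) (m : ℤ) :
    (Polynomial.aeval ((HahnSeries.single (1 : ℤ) (1 : k))⁻¹ : LaurentSeries k) q).coeff m =
      if m ≤ 0 then q.coeff m.natAbs else 0 := by
  have hpow : ∀ n : ℕ, ((HahnSeries.single (1 : ℤ) (1 : k))⁻¹ : LaurentSeries k) ^ n =
      HahnSeries.single (-(n : ℤ)) 1 := by
    intro n
    rw [HahnSeries.inv_single, HahnSeries.single_pow]
    simp
  induction q using Polynomial.induction_on' with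
  | add p q hp hq => 
    rw [map_add, HahnSeries.coeff_add, hp, hq, Polynomial.coeff_add]
    split_ifs <;> simp
  | monomial n c => 
    rw [Polynomial.aeval_monomial, hpow, A4aux_algebraMap, HahnSeries.C_mul_eq_smul,
      HahnSeries.coeff_smul,
      HahnSeries.coeff_single, Polynomial.coeff_monomial]
    by_cases h : m = -n
    · subst h
      simp
    · rw [if_neg h]
      split_ifs <;> first | omega | simp

theorem A4aux_nonAS {k : Type*} [Field k] (q : Polynomial k) (hq : q ≠ 0)
    (hodd : ∀ n, q.coeff n ≠ 0 → Odd n) (y : LaurentSeries k) :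
    y ^ 2 - y ≠ Polynomial.aeval ((HahnSeries.single (1 : ℤ) (1 : k))⁻¹ : LaurentSeries k) q := by
  intro hy
  have hl : q.coeff q.natDegree ≠ 0 := by simpa using hq
  have hd := hodd _ hl
  have hd' := hd.pos
  obtain ⟨e, he, hne, -⟩ := A4aux_order_even y _ hy (-(q.natDegree : ℤ)) (by omega) (by
    rw [A4aux_coeff_aeval, if_pos (by omega)]
    simpa using hq)
  rw [A4aux_coeff_aeval, if_pos (by omega)] at hne
  have := hodd _ hne
  rw [Nat.odd_iff] at this
  omega

theorem A4aux_nonneg {k : Type*} [Field k] [CharP k 2]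
    (σ : LaurentSeries k →+* LaurentSeries k)
    (ht : σ (HahnSeries.single (1 : ℤ) (1 : k)) = HahnSeries.single (1 : ℤ) (1 : k))
    (F : PowerSeries k) (m : ℤ) (hm : m < 0) :
    (σ (HahnSeries.ofPowerSeries ℤ k F)).coeff m = 0 := by
  set f := σ (HahnSeries.ofPowerSeries ℤ k F) with hf
  by_cases hf0 : f = 0
  · rw [hf0]; simp
  apply HahnSeries.coeff_eq_zero_of_lt_order
  refine hm.trans_le ?_
  by_contra hcon
  push Not at hcon
  obtain ⟨Y, hY⟩ := A4aux_AS_solve (PowerSeries.X * F ^ 2) (by simp)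
  have h1 := congrArg (fun z => σ (HahnSeries.ofPowerSeries ℤ k z)) hY
  simp only [map_sub, map_mul, map_pow, HahnSeries.ofPowerSeries_X, ht, ← hf] at h1
  have ht0 : (HahnSeries.single (1 : ℤ) (1 : k) : LaurentSeries k) ≠ 0 := by simp
  have hh0 : HahnSeries.single (1 : ℤ) (1 : k) * f ^ 2 ≠ 0 := mul_ne_zero ht0 (pow_ne_zero _ hf0)
  have hord : (HahnSeries.single (1 : ℤ) (1 : k) * f ^ 2).order = 1 + (f.order + f.order) := by
    rw [HahnSeries.order_mul ht0 (pow_ne_zero _ hf0), pow_two, HahnSeries.order_mul hf0 hf0,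
      HahnSeries.order_single one_ne_zero]
  have hlead : (HahnSeries.single (1 : ℤ) (1 : k) * f ^ 2).coeff (1 + (f.order + f.order)) ≠ 0 := by
    rw [← hord]
    exact HahnSeries.coeff_order_eq_zero.not.mpr hh0
  obtain ⟨e, he, hne, hlt⟩ := A4aux_order_even _ _ h1 _ (by omega) hlead
  have h3 := HahnSeries.order_le_of_coeff_ne_zero hne
  rw [hord] at h3
  rcases h3.lt_or_eq with h4 | h4
  · exact hlead (hlt _ h4)
  · omega

theorem A4aux_id {k : Type*} [Field k] [CharP k 2]
    (σ : LaurentSeries k →+* LaurentSeries k)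
    (hc : ∀ c : k, σ (HahnSeries.C c) = HahnSeries.C c)
    (ht : σ (HahnSeries.single (1 : ℤ) (1 : k)) = HahnSeries.single (1 : ℤ) (1 : k))
    (f : LaurentSeries k) : σ f = f := by
  have hpoly : ∀ P : Polynomial k, σ (HahnSeries.ofPowerSeries ℤ k (P : PowerSeries k)) =
      HahnSeries.ofPowerSeries ℤ k (P : PowerSeries k) := by
    intro P
    have : (σ.comp (HahnSeries.ofPowerSeries ℤ k)).comp Polynomial.coeToPowerSeries.ringHom =
        (HahnSeries.ofPowerSeries ℤ k).comp Polynomial.coeToPowerSeries.ringHom := by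
      apply Polynomial.ringHom_ext
      · intro c
        simpa using hc c
      · simp [ht]
    exact congrArg (fun φ => φ P) this
  have hps : ∀ F : PowerSeries k, σ (HahnSeries.ofPowerSeries ℤ k F) =
      HahnSeries.ofPowerSeries ℤ k F := by
    intro F
    rw [← sub_eq_zero]
    ext m
    rw [HahnSeries.coeff_zero]
    set n := m.natAbs + 1 with hn
    set G := PowerSeries.mk fun i ↦ PowerSeries.coeff (i + n) F
    have hF := PowerSeries.eq_X_pow_mul_shift_add_trunc n F
    rw [hF]
    simp only [map_add, map_mul, map_pow, hpoly, HahnSeries.ofPowerSeries_X, ht]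
    rw [add_sub_add_right_eq_sub, ← mul_sub, HahnSeries.single_pow]
    have : m = (m - n) + n := by ring
    rw [this]
    simp only [nsmul_eq_mul, mul_one, one_pow, HahnSeries.coeff_single_mul_add, one_mul,
      HahnSeries.coeff_sub]
    rw [A4aux_nonneg σ ht _ _ (by omega), PowerSeries.coeff_coe, if_pos (by omega), sub_zero]
  have hz : ∀ z : ℤ, σ (HahnSeries.single z 1) = HahnSeries.single z 1 := by
    intro z
    have : (HahnSeries.single z (1 : k) : LaurentSeries k) = (HahnSeries.single (1 : ℤ) 1) ^ z := by
      simpa using RatFunc.single_zpow z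
    rw [this, map_zpow₀, ht]
  rw [← LaurentSeries.single_order_mul_powerSeriesPart f, map_mul, hz, hps]

theorem A4aux_squares (S : Subgroup (alternatingGroup (Fin 4)))
    (hS : ∀ g, g ^ 2 ∈ S) : S = ⊤ := by
  have h : alternatingGroup (Fin 4) ≤ S.map (alternatingGroup (Fin 4)).subtype := by
    refine Equiv.Perm.closure_three_cycles_eq_alternating.symm.le.trans
      ((Subgroup.closure_le _).mpr ?_)
    intro g hg
    have hg : g.IsThreeCycle := hg
    refine ⟨(⟨g, Equiv.Perm.mem_alternatingGroup.mpr hg.sign⟩ ^ 2) ^ 2, hS _, ?_⟩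
    have h3 : g ^ 3 = 1 := by rw [← hg.orderOf]; exact pow_orderOf_eq_one g
    change (g ^ 2) ^ 2 = g
    rw [← pow_mul, pow_succ g 3, h3, one_mul]
  rw [eq_top_iff]
  rintro ⟨g, hg⟩ -
  obtain ⟨s, hs, hsg⟩ := h hg
  have : s = ⟨g, hg⟩ := Subtype.ext hsg
  rwa [← this]

theorem A4aux_card12 (G : Type*) [Group G] (hG : Nat.card G = 12) (P : Subgroup G)
    (hP : Nat.card P = 3) (hn : ¬ P.Normal) :
    Nonempty (G ≃* alternatingGroup (Fin 4)) := by
  have : Finite G := Nat.finite_of_card_ne_zero (by omega)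
  have hidx : Nat.card (G ⧸ P) = 4 := by
    have := P.card_mul_index
    rw [Subgroup.index, hP, hG] at this
    omega
  have hcore : P.normalCore = ⊥ := by
    have hle := P.normalCore_le
    have hd := Subgroup.card_dvd_of_le hle
    rw [hP, Nat.dvd_prime Nat.prime_three] at hd
    rcases hd with hd | hd
    · exact Subgroup.card_eq_one.mp hd
    · exfalso
      apply hn
      have : P.normalCore = P := Subgroup.eq_of_le_of_card_ge hle (by omega)
      rw [← this]
      infer_instance
  have hinj : Function.Injective (MulAction.toPermHom G (G ⧸ P)) := by
    rw [← MonoidHom.ker_eq_bot_iff, ← Subgroup.normalCore_eq_ker, hcore]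
  let e : G ⧸ P ≃ Fin 4 := Finite.equivFinOfCardEq hidx
  let φ : G →* Equiv.Perm (Fin 4) := (e.permCongrHom.toMonoidHom).comp (MulAction.toPermHom G (G ⧸ P))
  have hφ : Function.Injective φ := e.permCongrHom.injective.comp hinj
  have hr : φ.range = alternatingGroup (Fin 4) := by
    apply Equiv.Perm.eq_alternatingGroup_of_index_eq_two
    have h1 := φ.range.card_mul_index
    have h2 : Nat.card φ.range = 12 := by
      rw [← hG]
      exact (Nat.card_congr (MonoidHom.ofInjective hφ).toEquiv).symm
    have h3 : Nat.card (Equiv.Perm (Fin 4)) = 24 := by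
      rw [Nat.card_eq_fintype_card, Fintype.card_perm]; rfl
    rw [h2, h3] at h1
    omega
  exact ⟨(MonoidHom.ofInjective hφ).trans (MulEquiv.subgroupCongr hr)⟩

theorem A4aux_AS_eq {N : Type*} [Field N] [CharP N 2] {u v : N} (h : u ^ 2 - u = v ^ 2 - v) :
    u = v ∨ u = v + 1 := by
  have h2 : (2 : N) = 0 := CharTwo.two_eq_zero
  have : (u - v) * (u - (v + 1)) = 0 := by linear_combination h + (v ^ 2 - u * v) * h2
  rcases mul_eq_zero.mp this with h | h
  · exact Or.inl (sub_eq_zero.mp h)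
  · exact Or.inr (sub_eq_zero.mp h)

theorem A4aux_klein {L N : Type*} [Field L] [Field N] [CharP N 2] [Algebra L N]
    [IsGalois L N] [FiniteDimensional L N] (x0 x1 : N) (a0 a1 : L)
    (hx0 : x0 ^ 2 - x0 = algebraMap L N a0) (hx1 : x1 ^ 2 - x1 = algebraMap L N a1)
    (n0 : ∀ y : L, y ^ 2 - y ≠ a0) (n1 : ∀ y : L, y ^ 2 - y ≠ a1)
    (n2 : ∀ y : L, y ^ 2 - y ≠ a0 + a1)
    (gen : ∀ h h' : N ≃ₐ[L] N, h x0 = h' x0 → h x1 = h' x1 → h = h') :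
    Nat.card (N ≃ₐ[L] N) = 4 ∧ ∃ h : N ≃ₐ[L] N, h x0 = x0 + 1 ∧ h x1 = x1 := by
  classical
  have h2 : (2 : N) = 0 := CharTwo.two_eq_zero
  have hne : ∀ u : N, u + 1 ≠ u := fun u h => one_ne_zero (by linear_combination h : (1 : N) = 0)
  have h11 : ∀ u : N, u + 1 + 1 = u := fun u => by linear_combination h2
  have mv : ∀ (u : N) (b : L), u ^ 2 - u = algebraMap L N b → (∀ y : L, y ^ 2 - y ≠ b) →
      ∃ h : N ≃ₐ[L] N, h u ≠ u := by
    intro u b hu hb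
    by_contra hcon
    push Not at hcon
    obtain ⟨y, hy⟩ := (IsGalois.mem_range_algebraMap_iff_fixed u).mpr hcon
    apply hb y
    apply (algebraMap L N).injective
    rw [map_sub, map_pow, hy, hu]
  have cs : ∀ (u : N) (b : L), u ^ 2 - u = algebraMap L N b → ∀ h : N ≃ₐ[L] N,
      h u = u ∨ h u = u + 1 := by
    intro u b hu h
    apply A4aux_AS_eq
    rw [hu, ← map_pow, ← map_sub, hu, AlgEquiv.commutes]
  have c0 := cs x0 a0 hx0
  have c1 := cs x1 a1 hx1
  obtain ⟨g0, hg0⟩ := mv x0 a0 hx0 n0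
  obtain ⟨g1, hg1⟩ := mv x1 a1 hx1 n1
  obtain ⟨g2, hg2⟩ := mv (x0 + x1) (a0 + a1) (by
    rw [map_add, ← hx0, ← hx1]; linear_combination x0 * x1 * h2) n2
  replace hg0 := (c0 g0).resolve_left hg0
  replace hg1 := (c1 g1).resolve_left hg1
  have key : (∃ h : N ≃ₐ[L] N, h x0 = x0 + 1 ∧ h x1 = x1) ∧
      (∃ h : N ≃ₐ[L] N, h x0 = x0 ∧ h x1 = x1 + 1) := by
    rw [map_add] at hg2
    rcases c0 g2 with e0 | e0 <;> rcases c1 g2 with e1 | e1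
    · exact absurd (by rw [e0, e1]) hg2
    · refine ⟨?_, g2, e0, e1⟩
      rcases c1 g0 with e | e
      · exact ⟨g0, hg0, e⟩
      · exact ⟨g2 * g0, by simp [hg0, e0], by simp [e, e1, h11]⟩
    · refine ⟨⟨g2, e0, e1⟩, ?_⟩
      rcases c0 g1 with e | e
      · exact ⟨g1, e, hg1⟩
      · exact ⟨g2 * g1, by simp [e, e0, h11], by simp [hg1, e1]⟩
    · exact absurd (by rw [e0, e1]; linear_combination h2) hg2
  refine ⟨?_, key.1⟩
  obtain ⟨⟨p, p0, p1⟩, q, q0, q1⟩ := key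
  let φ : (N ≃ₐ[L] N) → Bool × Bool := fun h => (decide (h x0 = x0), decide (h x1 = x1))
  have hφ : Function.Bijective φ := by
    constructor
    · intro h h' hh
      simp only [φ, Prod.mk.injEq, decide_eq_decide] at hh
      apply gen
      · rcases c0 h with e | e
        · rw [e, hh.1.mp e]
        · rcases c0 h' with e' | e'
          · exact absurd (hh.1.mpr e') (by rw [e]; exact hne _)
          · rw [e, e']
      · rcases c1 h with e | e
        · rw [e, hh.2.mp e]
        · rcases c1 h' with e' | e'
          · exact absurd (hh.2.mpr e') (by rw [e]; exact hne _)
          · rw [e, e']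
    · rintro ⟨_ | _, _ | _⟩
      · exact ⟨p * q, by simp [φ, p0, p1, q0, q1]⟩
      · exact ⟨p, by simp [φ, p0, p1]⟩
      · exact ⟨q, by simp [φ, q0, q1]⟩
      · exact ⟨1, by simp [φ]⟩
  rw [Nat.card_eq_of_bijective φ hφ]
  simp

theorem A4aux_omega_pow {k : Type*} [Field k] [CharP k 2] (ω : k) (hω : ω ^ 2 + ω + 1 = 0)
    (n : ℕ) : 1 + ω ^ n + ω ^ n * ω ^ n = if 3 ∣ n then 1 else 0 := by
  have h2 : (2 : k) = 0 := CharTwo.two_eq_zero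
  have h3 : ω ^ 3 = 1 := by linear_combination (ω - 1) * hω
  have hn : ω ^ n = ω ^ (n % 3) := by
    conv_lhs => rw [← Nat.div_add_mod n 3, pow_add, pow_mul, h3, one_pow, one_mul]
  have hlt : n % 3 < 3 := Nat.mod_lt _ (by norm_num)
  rw [hn]
  by_cases h : 3 ∣ n
  · rw [if_pos h, Nat.mod_eq_zero_of_dvd h]
    linear_combination h2
  · rw [if_neg h]
    have : n % 3 = 1 ∨ n % 3 = 2 := by omega
    rcases this with h | h <;> rw [h]
    · linear_combination hω
    · linear_combination (ω ^ 2 - ω + 1) * hω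

theorem A4aux_zeta {k : Type*} [Field k] [IsAlgClosed k] [CharP k 2]
    (σ : LaurentSeries k →+* LaurentSeries k)
    (hc : ∀ c : k, σ (HahnSeries.C c) = HahnSeries.C c)
    (ht : σ (HahnSeries.single (1 : ℤ) (1 : k) ^ 3) = HahnSeries.single (1 : ℤ) (1 : k) ^ 3)
    (hne : ∃ f, σ f ≠ f) :
    ∃ ω : k, ω ^ 2 + ω + 1 = 0 ∧ ∀ q : Polynomial k,
      σ (Polynomial.aeval ((HahnSeries.single (1 : ℤ) (1 : k))⁻¹ : LaurentSeries k) q) =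
      Polynomial.aeval ((HahnSeries.single (1 : ℤ) (1 : k))⁻¹ : LaurentSeries k)
        (q.comp (Polynomial.C ω * Polynomial.X)) := by
  obtain ⟨ζ, hζ⟩ : ∃ ζ : k, ζ ^ 2 + ζ + 1 = 0 := by
    have hd : (Polynomial.C (1 : k) * Polynomial.X ^ 2 + Polynomial.C 1 * Polynomial.X +
        Polynomial.C 1).degree = 2 := Polynomial.degree_quadratic one_ne_zero
    obtain ⟨z, hz⟩ := IsAlgClosed.exists_root _ (by rw [hd]; norm_num)
    exact ⟨z, by simpa [Polynomial.IsRoot] using hz⟩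
  set t : LaurentSeries k := HahnSeries.single (1 : ℤ) (1 : k) with htdef
  have ht0 : t ≠ 0 := by simp [htdef]
  rw [map_pow] at ht
  have hs0 : σ t ≠ 0 := by
    intro h
    rw [h] at ht
    exact pow_ne_zero 3 ht0 (by rw [← ht]; simp)
  have hroot : (σ t⁻¹ - t⁻¹) * ((σ t⁻¹ - HahnSeries.C ζ * t⁻¹) *
      (σ t⁻¹ - HahnSeries.C (ζ ^ 2) * t⁻¹)) = 0 := by
    have h3 : (σ t⁻¹) ^ 3 = t⁻¹ ^ 3 := by rw [map_inv₀, inv_pow, inv_pow, ht]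
    have hz : (HahnSeries.C ζ : LaurentSeries k) ^ 2 + HahnSeries.C ζ + 1 = 0 := by
      rw [← map_pow, ← map_one HahnSeries.C, ← map_add, ← map_add, hζ, map_zero]
    rw [map_pow]
    generalize (HahnSeries.C ζ : LaurentSeries k) = c at *
    generalize σ t⁻¹ = u at *
    generalize t⁻¹ = v at *
    linear_combination h3 + (-(u - v) * u * v  + (u - v) * v ^ 2 * (c - 1)) * hz
  have key : ∀ ω : k, σ t⁻¹ = HahnSeries.C ω * t⁻¹ → ∀ q : Polynomial k,
      σ (Polynomial.aeval t⁻¹ q) =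
      Polynomial.aeval t⁻¹ (q.comp (Polynomial.C ω * Polynomial.X)) := by
    intro ω hω q
    have hcomp : σ.comp (algebraMap k (LaurentSeries k)) = algebraMap k (LaurentSeries k) := by
      ext1 c
      rw [RingHom.comp_apply, A4aux_algebraMap, hc]
    rw [Polynomial.aeval_comp, Polynomial.aeval_def, Polynomial.hom_eval₂, hcomp, hω,
      Polynomial.aeval_def]
    simp only [map_mul, Polynomial.aeval_C, Polynomial.aeval_X, A4aux_algebraMap]
  rcases mul_eq_zero.mp hroot with h | h
  · exfalso
    obtain ⟨f, hf⟩ := hne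
    refine hf (A4aux_id σ hc ?_ f)
    rw [sub_eq_zero, map_inv₀] at h
    exact inv_injective h
  rcases mul_eq_zero.mp h with h | h
  · exact ⟨ζ, hζ, key ζ (sub_eq_zero.mp h)⟩
  · exact ⟨ζ ^ 2, by linear_combination (ζ ^ 2 - ζ + 1) * hζ, key _ (sub_eq_zero.mp h)⟩

theorem A4aux_comp_coeff {k : Type*} [Field k] (q : Polynomial k) (ω : k) (n : ℕ) :
    (q.comp (Polynomial.C ω * Polynomial.X)).coeff n = q.coeff n * ω ^ n := by
  rw [Polynomial.comp_C_mul_X_coeff]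



/-- Let `k` be algebraically closed of characteristic 2, `K = k((s)) ⊆ L = k((t))`
with `t³ = s` a `ℤ/3`-extension, and let `a ∈ t⁻¹k[t⁻¹]` be nonzero in standard form
(only odd-degree terms in `t⁻¹`).  If `N` is the Galois closure over `K` of the
Artin–Schreier extension `L[x]/(x² − x − a)`, then `Gal(N/K) ≅ A₄` if and only if
`a` has no nonzero terms of degree divisible by 3. -/
theorem A4_iff_no_terms_divisible_by_three
    (k : Type*) [Field k] [IsAlgClosed k] [CharP k 2]
    (K : Type*) [Field K] [Algebra K (LaurentSeries k)]
    [IsGalois K (LaurentSeries k)]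
    (hKL : Module.finrank K (LaurentSeries k) = 3)
    (hs : (HahnSeries.single (1 : ℤ) (1 : k) : LaurentSeries k) ^ 3 ∈
      (algebraMap K (LaurentSeries k)).range)
    (hk : ∀ c : k, algebraMap k (LaurentSeries k) c ∈
      (algebraMap K (LaurentSeries k)).range)
    (p : Polynomial k) (hp : p ≠ 0) (hodd : ∀ n, p.coeff n ≠ 0 → Odd n)
    (a : LaurentSeries k)
    (ha : a = Polynomial.aeval
      ((HahnSeries.single (1 : ℤ) (1 : k))⁻¹ : LaurentSeries k) p)
    (N : Type*) [Field N] [Algebra (LaurentSeries k) N] [Algebra K N]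
    [IsScalarTower K (LaurentSeries k) N] [IsGalois K N] [FiniteDimensional K N]
    (x : N) (hx : x ^ 2 - x = algebraMap (LaurentSeries k) N a)
    (hclosure : IntermediateField.adjoin (LaurentSeries k)
      {y : N | ∃ σ : N ≃ₐ[K] N, y = σ x} = ⊤) :
    Nonempty ((N ≃ₐ[K] N) ≃* alternatingGroup (Fin 4)) ↔
      ∀ n, p.coeff n ≠ 0 → ¬ (3 ∣ n) := by
  classical
  set t : LaurentSeries k := HahnSeries.single (1 : ℤ) (1 : k) with htdef
  have hcharL : CharP (LaurentSeries k) 2 :=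
    charP_of_injective_ringHom (HahnSeries.C_injective (Γ := ℤ) (R := k)) 2
  have hcharN : CharP N 2 :=
    charP_of_injective_ringHom (algebraMap (LaurentSeries k) N).injective 2
  have h2 : (2 : N) = 0 := CharTwo.two_eq_zero
  have h2k : (2 : k) = 0 := CharTwo.two_eq_zero
  have : FiniteDimensional (LaurentSeries k) N := FiniteDimensional.right K (LaurentSeries k) N
  have : IsGalois (LaurentSeries k) N := IsGalois.tower_top_of_isGalois K (LaurentSeries k) N
  have : FiniteDimensional K (LaurentSeries k) :=
    FiniteDimensional.of_finrank_pos (by omega)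
  -- the restriction homomorphism
  let r : (N ≃ₐ[K] N) →* (LaurentSeries k ≃ₐ[K] LaurentSeries k) :=
    AlgEquiv.restrictNormalHom (LaurentSeries k)
  have hr : ∀ (f : N ≃ₐ[K] N) (y : LaurentSeries k),
      f (algebraMap _ N y) = algebraMap _ N (r f y) := fun f y =>
    (AlgEquiv.restrictNormal_commutes f (LaurentSeries k) y).symm
  have hrsurj : Function.Surjective r := AlgEquiv.restrictNormalHom_surjective N
  have zeta : ∀ σ : LaurentSeries k ≃ₐ[K] LaurentSeries k, σ ≠ 1 →
      ∃ ω : k, ω ^ 2 + ω + 1 = 0 ∧ ∀ q : Polynomial k,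
        σ (Polynomial.aeval t⁻¹ q) =
          Polynomial.aeval t⁻¹ (q.comp (Polynomial.C ω * Polynomial.X)) := by
    intro σ hσ
    refine A4aux_zeta (σ : LaurentSeries k →+* LaurentSeries k) ?_ ?_ ?_
    · intro c
      obtain ⟨z, hz⟩ := hk c
      rw [← A4aux_algebraMap, ← hz]
      exact σ.commutes z
    · obtain ⟨z, hz⟩ := hs
      rw [← hz]
      exact σ.commutes z
    · by_contra hcon
      push Not at hcon
      exact hσ (AlgEquiv.ext hcon)
  have hcardL : Nat.card (LaurentSeries k ≃ₐ[K] LaurentSeries k) = 3 := by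
    rw [IsGalois.card_aut_eq_finrank, hKL]
  obtain ⟨ρ, hρ⟩ : ∃ ρ : LaurentSeries k ≃ₐ[K] LaurentSeries k, ρ ≠ 1 := by
    have : Nontrivial (LaurentSeries k ≃ₐ[K] LaurentSeries k) := by
      have : Finite (LaurentSeries k ≃ₐ[K] LaurentSeries k) :=
        Nat.finite_of_card_ne_zero (by omega)
      exact (Finite.one_lt_card_iff_nontrivial).mp (by omega)
    exact exists_ne 1
  obtain ⟨ω, hω, hρA⟩ := zeta ρ hρ
  have hω3 : ω ^ 3 = 1 := by linear_combination (ω - 1) * hω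
  have hω0 : ω ≠ 0 := by
    rintro rfl
    simp at hω
  obtain ⟨g, hg⟩ := hrsurj ρ
  set p1 := p.comp (Polynomial.C ω * Polynomial.X) with hp1
  set p2 := p1.comp (Polynomial.C ω * Polynomial.X) with hp2
  have c1 : ∀ n, p1.coeff n = p.coeff n * ω ^ n := A4aux_comp_coeff p ω
  have c2 : ∀ n, p2.coeff n = p.coeff n * ω ^ n * ω ^ n := fun n => by
    rw [hp2, A4aux_comp_coeff, c1]
  have csum : ∀ n, (p + p1 + p2).coeff n = if 3 ∣ n then p.coeff n else 0 := by
    intro n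
    rw [Polynomial.coeff_add, Polynomial.coeff_add, c1, c2]
    have := A4aux_omega_pow ω hω n
    split_ifs at this ⊢
    · linear_combination p.coeff n * this
    · linear_combination p.coeff n * this
  have hother : ∀ ω' : k, ω' ^ 2 + ω' + 1 = 0 → ω' = ω ∨ ω' = ω ^ 2 := by
    intro ω' h'
    have : (ω' - ω) * (ω' - ω ^ 2) = 0 := by
      linear_combination h' + (ω - 1) * hω - ω' * hω
    rcases mul_eq_zero.mp this with h | h
    · exact Or.inl (sub_eq_zero.mp h)
    · exact Or.inr (sub_eq_zero.mp h)
  have hx1 : (g x) ^ 2 - g x = algebraMap (LaurentSeries k) N (Polynomial.aeval t⁻¹ p1) := by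
    rw [← map_pow, ← map_sub, hx, hr, hg, ha, hρA]
  have hx2 : (g (g x)) ^ 2 - g (g x) =
      algebraMap (LaurentSeries k) N (Polynomial.aeval t⁻¹ p2) := by
    rw [← map_pow, ← map_sub, hx1, hr, hg, hρA]
  rw [ha] at hx
  constructor
  · rintro ⟨e⟩ n hn h3
    set q := p + p1 + p2 with hq
    have hq0 : q ≠ 0 := by
      intro h
      have := csum n
      rw [h, if_pos h3] at this
      exact hn (by simpa using this.symm)
    have hqodd : ∀ n, q.coeff n ≠ 0 → Odd n := by
      intro n hn
      rw [csum] at hn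
      split_ifs at hn
      · exact hodd n hn
      · exact absurd rfl hn
    have hqfix : ∀ σ : LaurentSeries k ≃ₐ[K] LaurentSeries k,
        σ (Polynomial.aeval t⁻¹ q) = Polynomial.aeval t⁻¹ q := by
      intro σ
      by_cases hσ : σ = 1
      · rw [hσ]; rfl
      obtain ⟨ω', hω', hA⟩ := zeta σ hσ
      rw [hA]
      congr 1
      ext m
      rw [A4aux_comp_coeff, csum]
      split_ifs with hm
      · obtain ⟨j, rfl⟩ := hm
        have : ω' ^ 3 = 1 := by linear_combination (ω' - 1) * hω'
        rw [pow_mul, this, one_pow, mul_one]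
      · rw [zero_mul]
    set u := x + g x + g (g x) with hu
    have huAS : u ^ 2 - u = algebraMap (LaurentSeries k) N (Polynomial.aeval t⁻¹ q) := by
      rw [hq, map_add, map_add, map_add, map_add, ← hx, ← hx1, ← hx2]
      linear_combination (x * g x + x * g (g x) + g x * g (g x)) * h2
    have hmove : ∀ f : N ≃ₐ[K] N, f u = u ∨ f u = u + 1 := by
      intro f
      apply A4aux_AS_eq
      rw [huAS, ← map_pow, ← map_sub, huAS, hr, hqfix]
    have htop := A4aux_squares ((MulAction.stabilizer (N ≃ₐ[K] N) u).map e.toMonoidHom) (by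
      intro y
      refine ⟨(e.symm y) ^ 2, ?_, by simp⟩
      change ((e.symm y) ^ 2 : N ≃ₐ[K] N) u = u
      rw [pow_two, AlgEquiv.mul_apply]
      rcases hmove (e.symm y) with h | h
      · rw [h, h]
      · rw [h, map_add, map_one, h]
        linear_combination h2)
    have hfix : ∀ f : N ≃ₐ[K] N, f u = u := by
      intro f
      have : e f ∈ (MulAction.stabilizer (N ≃ₐ[K] N) u).map e.toMonoidHom := by
        rw [htop]; trivial
      obtain ⟨f', hf', hff⟩ := this
      have : f' = f := e.injective hff
      rw [this] at hf'
      exact hf'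
    obtain ⟨z, hz⟩ := (IsGalois.mem_range_algebraMap_iff_fixed u).mpr hfix
    apply A4aux_nonAS q hq0 hqodd (algebraMap K (LaurentSeries k) z)
    apply (algebraMap (LaurentSeries k) N).injective
    rw [map_sub, map_pow, ← IsScalarTower.algebraMap_apply, hz, huAS]
  · intro h3
    have hsum : p + p1 + p2 = 0 := by
      ext n
      rw [csum, Polynomial.coeff_zero]
      split_ifs with h
      · by_contra hcon
        exact h3 n hcon h
      · rfl
    have hpp : p2 = p + p1 := by
      ext n
      have := congrArg (fun z => Polynomial.coeff z n) hsum
      simp only [Polynomial.coeff_add, Polynomial.coeff_zero] at this ⊢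
      linear_combination this - (p.coeff n + p1.coeff n) * h2k
    have hp1odd : ∀ n, p1.coeff n ≠ 0 → Odd n := fun n hn =>
      hodd n (fun h => hn (by rw [c1, h, zero_mul]))
    have hp2odd : ∀ n, p2.coeff n ≠ 0 → Odd n := fun n hn =>
      hodd n (fun h => hn (by rw [c2, h, zero_mul, zero_mul]))
    have hp10 : p1 ≠ 0 := by
      intro h
      apply hp
      ext n
      have := c1 n
      rw [h, Polynomial.coeff_zero, eq_comm, mul_eq_zero] at this
      simpa using this.resolve_right (pow_ne_zero _ hω0)
    have hp20 : p2 ≠ 0 := by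
      intro h
      apply hp
      ext n
      have := c2 n
      rw [h, Polynomial.coeff_zero, eq_comm, mul_eq_zero, mul_eq_zero] at this
      simpa using (this.resolve_right (pow_ne_zero _ hω0)).resolve_right (pow_ne_zero _ hω0)
    -- every conjugate of `x`
    have hconj : ∀ f : N ≃ₐ[K] N, ∃ v : N, (v = x ∨ v = g x ∨ v = x + g x) ∧
        (f x = v ∨ f x = v + 1) := by
      intro f
      have hfx : (f x) ^ 2 - f x =
          algebraMap (LaurentSeries k) N (r f (Polynomial.aeval t⁻¹ p)) := by
        rw [← map_pow, ← map_sub, hx, hr]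
      by_cases hf : r f = 1
      · refine ⟨x, Or.inl rfl, A4aux_AS_eq ?_⟩
        rw [hfx, hf, hx]; rfl
      obtain ⟨ω', hω', hA⟩ := zeta (r f) hf
      rcases hother ω' hω' with rfl | rfl
      · refine ⟨g x, Or.inr (Or.inl rfl), A4aux_AS_eq ?_⟩
        rw [hfx, hA, hx1]
      · refine ⟨x + g x, Or.inr (Or.inr rfl), A4aux_AS_eq ?_⟩
        have : p.comp (Polynomial.C (ω ^ 2) * Polynomial.X) = p2 := by
          ext n
          rw [A4aux_comp_coeff, c2]
          ring
        rw [hfx, hA, this, hpp, map_add, map_add, ← hx, ← hx1]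
        linear_combination (- x * g x) * h2
    have gen : ∀ h h' : N ≃ₐ[LaurentSeries k] N, h x = h' x → h (g x) = h' (g x) → h = h' := by
      intro h h' e0 e1
      apply AlgEquiv.ext
      intro y
      have hy : y ∈ IntermediateField.adjoin (LaurentSeries k)
          {y : N | ∃ σ : N ≃ₐ[K] N, y = σ x} := by rw [hclosure]; trivial
      induction hy using IntermediateField.adjoin_induction with
      | mem y hy =>
        obtain ⟨f, rfl⟩ := hy
        obtain ⟨v, hv, hfv⟩ := hconj f
        have hv' : h v = h' v := by
          rcases hv with rfl | rfl | rfl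
          · exact e0
          · exact e1
          · rw [map_add, map_add, e0, e1]
        rcases hfv with hfv | hfv
        · rw [hfv, hv']
        · rw [hfv, map_add, map_add, hv', map_one, map_one]
      | algebraMap y => rw [AlgEquiv.commutes, AlgEquiv.commutes]
      | add y z _ _ hy hz => rw [map_add, map_add, hy, hz]
      | inv y _ hy => rw [map_inv₀, map_inv₀, hy]
      | mul y z _ _ hy hz => rw [map_mul, map_mul, hy, hz]
    obtain ⟨hcard, h, hh0, hh1⟩ := A4aux_klein x (g x) _ _ hx hx1 (A4aux_nonAS p hp hodd)
      (A4aux_nonAS p1 hp10 hp1odd)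
      (by rw [← map_add, ← hpp]; exact A4aux_nonAS p2 hp20 hp2odd) gen
    have hG : Nat.card (N ≃ₐ[K] N) = 12 := by
      rw [IsGalois.card_aut_eq_finrank] at hcard ⊢
      rw [← Module.finrank_mul_finrank K (LaurentSeries k) N, hKL, hcard]
    have hρ3 : ρ ^ 3 = 1 := by rw [← hcardL]; exact pow_card_eq_one'
    have hordρ : orderOf ρ = 3 := orderOf_eq_prime hρ3 hρ
    have hτ3 : (g ^ 4) ^ 3 = 1 := by
      rw [← pow_mul, show 4 * 3 = 12 from rfl, ← hG]; exact pow_card_eq_one'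
    have hrτ : r (g ^ 4) = ρ := by
      rw [map_pow, hg, pow_succ, hρ3, one_mul]
    have hordτ : orderOf (g ^ 4) = 3 := by
      refine orderOf_eq_prime hτ3 ?_
      intro h
      rw [h, map_one] at hrτ
      exact hρ hrτ.symm
    refine A4aux_card12 _ hG (Subgroup.zpowers (g ^ 4)) (by rw [Nat.card_zpowers, hordτ]) ?_
    intro hnorm
    generalize g ^ 4 = τ at *
    let η : N ≃ₐ[K] N := h.restrictScalars K
    have hη : ∀ y, η y = h y := fun _ => rfl
    have hrη : r η = 1 := by
      apply AlgEquiv.ext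
      intro y
      apply (algebraMap (LaurentSeries k) N).injective
      rw [← hr, hη, h.commutes]
      rfl
    have hmem : η * τ * η⁻¹ * τ⁻¹ ∈ Subgroup.zpowers τ :=
      mul_mem (hnorm.conj_mem τ (Subgroup.mem_zpowers τ) η) (inv_mem (Subgroup.mem_zpowers τ))
    obtain ⟨i, hi⟩ := Subgroup.mem_zpowers_iff.mp hmem
    have hone : η * τ * η⁻¹ * τ⁻¹ = 1 := by
      have h1 := congrArg r hi
      rw [map_zpow, hrτ] at h1
      simp only [map_mul, map_inv, hrη, hrτ, one_mul, inv_one, mul_one, mul_inv_cancel] at h1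
      rw [← orderOf_dvd_iff_zpow_eq_one, hordρ, ← hordτ, orderOf_dvd_iff_zpow_eq_one] at h1
      rw [← hi, h1]
    have hcomm : η * τ = τ * η := by
      rw [mul_inv_eq_one, mul_inv_eq_iff_eq_mul] at hone
      exact hone
    have happ : h (τ x) = τ (h x) := congrArg (fun f : N ≃ₐ[K] N => f x) hcomm
    have hτx : τ x = g x ∨ τ x = g x + 1 := by
      apply A4aux_AS_eq
      rw [← map_pow, ← map_sub, hx, hr, hrτ, hρA, hx1]
    have hfixτ : h (τ x) = τ x := by
      rcases hτx with e | e
      · rw [e, hh1]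
      · rw [e, map_add, hh1, map_one]
    rw [hfixτ, hh0, map_add, map_one] at happ
    exact one_ne_zero (by linear_combination - happ : (1 : N) = 0)
end
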